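/- arXiv:2507.18555 — 2 statements merged into one kernel-verified Lean document; each statement's English description precedes it below -/
import Mathlib

section
/- Let d ≥ 2 and let k(x,y) = E_Z[relu(⟨x,Z⟩)·relu(⟨y,Z⟩)] with Z standard Gaussian in ℝ^d. Define F_0(x) = |x|/√d, F_l(x) = x_l for 1 ≤ l ≤ d, F_γ(x) = (√(d+2)/√2)·( x_γ²/|x| − |x|/d − (1/(√d+1))(x_d²/|x| − |x|/d) ) for 1 ≤ γ ≤ d−1, and F_{αβ}(x) = √(d+2)·x_α x_β/|x| for 1 ≤ α < β ≤ d. Then for all nonzero x, y: k(x,y) = ((2d+1)/(4π))·F_0(x)F_0(y) + (1/4)·Σ_{l=1}^d F_l(x)F_l(y) + (1/(2π(d+2)))·( Σ_{γ=1}^{d−1} F_γ(x)F_γ(y) + Σ_{α<β} F_{αβ}(x)F_{αβ}(y) ) + r(x,y), where r(x,y) = (1/(2π))·Σ_{n=1}^∞ C(2n,n)·⟨x,y⟩^{2n+2}/(2^{2n}(2n+1)(2n+2)(|x||y|)^{2n+1}) and this series converges absolutely. -/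
open MeasureTheory Real

/-- The standard Gaussian measure on `ℝ^d`. -/
noncomputable def stdGaussian (d : ℕ) : Measure (Fin d → ℝ) :=
  Measure.pi fun _ => ProbabilityTheory.gaussianReal 0 1

/-- ReLU activation. -/
def relu (t : ℝ) : ℝ := max t 0

/-- Euclidean inner product on `ℝ^d`. -/
noncomputable def dot {d : ℕ} (x y : Fin d → ℝ) : ℝ := ∑ i, x i * y i

/-- Euclidean norm on `ℝ^d`. -/
noncomputable def vnorm {d : ℕ} (x : Fin d → ℝ) : ℝ := Real.sqrt (∑ i, x i ^ 2)

/-- The neural tangent kernel `k(x,y) = E_Z[relu(⟨x,Z⟩) relu(⟨y,Z⟩)]`. -/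
noncomputable def ntk (d : ℕ) (x y : Fin d → ℝ) : ℝ :=
  ∫ z, relu (dot x z) * relu (dot y z) ∂ stdGaussian d

/-- The `n`-th term of the series part of the NTK expansion. -/
noncomputable def ntkTerm {d : ℕ} (x y : Fin d → ℝ) (n : ℕ) : ℝ :=
  (Nat.choose (2 * n) n : ℝ) * dot x y ^ (2 * n + 2) /
    (2 ^ (2 * n) * (2 * n + 1) * (2 * n + 2) * (vnorm x * vnorm y) ^ (2 * n + 1))

/-- Remainder kernel `r(x,y)`. -/
noncomputable def rker {d : ℕ} (x y : Fin d → ℝ) : ℝ :=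
  (1 / (2 * π)) * ∑' n : ℕ, ntkTerm x y (n + 1)

noncomputable def F0 (d : ℕ) (x : Fin d → ℝ) : ℝ := vnorm x / Real.sqrt d

noncomputable def Fl (d : ℕ) (l : Fin d) (x : Fin d → ℝ) : ℝ := x l

/-- `F_γ`, where the last coordinate (index `d` in one-based notation) is `⟨d-1, _⟩`. -/
noncomputable def Fgam (d : ℕ) (hd : 0 < d) (γ : Fin d) (x : Fin d → ℝ) : ℝ :=
  (Real.sqrt (d + 2) / Real.sqrt 2) *
    (x γ ^ 2 / vnorm x - vnorm x / d
      - (1 / (Real.sqrt d + 1)) *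
        (x ⟨d - 1, Nat.sub_lt hd one_pos⟩ ^ 2 / vnorm x - vnorm x / d))

noncomputable def Fab (d : ℕ) (α β : Fin d) (x : Fin d → ℝ) : ℝ :=
  Real.sqrt (d + 2) * x α * x β / vnorm x

/-!
The joint law of `(⟪x, Z⟫, ⟪y, Z⟫)` depends only on the Gram matrix of `x` and `y`, so `x` and `y`
may be replaced by `|x|` and `|y| e^{iθ}` in `ℂ`, where `θ` is their angle. In polar coordinates the
expectation becomes the arc-cosine kernel `|x| |y| (sin θ + (π - θ) cos θ) / (2π)`, which for
`ρ = cos θ` equals `|x| |y| (√(1 - ρ²) + ρ arcsin ρ) / (2π) + ⟪x, y⟫ / 4`. Integrating the binomial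
series of `1 / √(1 - t)` twice expands `√(1 - ρ²) + ρ arcsin ρ` in even powers of `ρ`, absolutely
convergent up to `|ρ| = 1`. The terms of degree `0` and `2` in `ρ`, together with `⟪x, y⟫ / 4`, are
reproduced by the functions `F` through the addition formula for harmonics of degree at most two:
the `F_γ` and `F_{αβ}` together yield `(d + 2) / 2 * |x| |y| (ρ² - 1 / d)`.
-/

section PowerSeries

theorem ring_choose_half_add_sub_one {K : Type*} [Field K] [CharZero K] [BinomialRing K] (n : ℕ) :
    Ring.choose ((1 / 2 : K) + n - 1) n = n.centralBinom / 4 ^ n := by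
  have ascPochhammer_half (m : ℕ) :
      (ascPochhammer K m).eval (1 / 2) = m.factorial * (m.centralBinom / 4 ^ m) := by
    induction m with
    | zero => simp
    | succ k ih =>
      have hk : ((k : K) + 1) * (k + 1).centralBinom = 2 * (2 * k + 1) * k.centralBinom :=
        mod_cast Nat.succ_mul_centralBinom_succ k
      rw [ascPochhammer_succ_eval, ih, Nat.factorial_succ, pow_succ]
      push_cast
      field_simp
      linear_combination (-2) * (k.factorial : K) * hk
  have h := Ring.factorial_nsmul_multichoose_eq_ascPochhammer (1 / 2 : K) n
  rw [Polynomial.ascPochhammer_smeval_eq_eval, ascPochhammer_half, nsmul_eq_mul] at h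
  rw [← Ring.multichoose_eq]
  exact mul_left_cancel₀ (Nat.cast_ne_zero.2 n.factorial_ne_zero) h

theorem hasSum_centralBinom_mul_pow {t : ℝ} (ht : |t| < 1) :
    HasSum (fun n : ℕ ↦ n.centralBinom / 4 ^ n * t ^ n) (1 / √(1 - t)) := by
  have h := (one_div_one_sub_rpow_hasFPowerSeriesOnBall_zero (1 / 2)).hasSum (y := t)
    (by simpa [enorm_eq_nnnorm] using! ht)
  simp only [FormalMultilinearSeries.ofScalars_apply_eq, ring_choose_half_add_sub_one, zero_add,
    smul_eq_mul] at h
  rwa [sqrt_eq_rpow]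

theorem hasDerivAt_mul_pow_succ_div {𝕜 : Type*} [NontriviallyNormedField 𝕜] [CharZero 𝕜]
    (c : 𝕜) (k : ℕ) (z : 𝕜) :
    HasDerivAt (fun w ↦ c * (w ^ (k + 1) / (k + 1))) (c * z ^ k) z := by
  refine (((hasDerivAt_pow (k + 1) z).div_const _).const_mul c).congr_deriv ?_
  have : (k + 1 : 𝕜) ≠ 0 := mod_cast k.succ_ne_zero
  push_cast
  rw [mul_div_cancel_left₀ _ this]

theorem hasSum_of_hasDerivAt_of_hasSum {𝕜 : Type*} [RCLike 𝕜] {a : ℕ → 𝕜} {k : ℕ → ℕ}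
    {f f' : 𝕜 → 𝕜} {R : ℝ}
    (hf : ∀ z ∈ Metric.ball (0 : 𝕜) R, HasDerivAt f (f' z) z)
    (hf' : ∀ z ∈ Metric.ball (0 : 𝕜) R, HasSum (fun n ↦ a n * z ^ k n) (f' z))
    {z : 𝕜} (hz : z ∈ Metric.ball 0 R) :
    HasSum (fun n ↦ a n * (z ^ (k n + 1) / (k n + 1))) (f z - f 0) := by
  obtain ⟨r, hzr, hrR⟩ := exists_between (mem_ball_zero_iff.1 hz)
  have hr : 0 < r := (norm_nonneg z).trans_lt hzr
  have hball : Metric.ball (0 : 𝕜) r ⊆ Metric.ball 0 R := Metric.ball_subset_ball hrR.le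
  have hz : z ∈ Metric.ball 0 r := mem_ball_zero_iff.2 hzr
  have bound_summable : Summable fun n ↦ ‖a n‖ * r ^ k n := by
    simpa [abs_of_pos hr] using (hf' (r : 𝕜) (by simpa [abs_of_pos hr])).summable.norm
  have term_bound (n : ℕ) (w : 𝕜) (hw : w ∈ Metric.ball 0 r) :
      ‖a n * w ^ k n‖ ≤ ‖a n‖ * r ^ k n := by
    rw [norm_mul, norm_pow]
    gcongr
    exact (mem_ball_zero_iff.1 hw).le
  have h0 : (0 : 𝕜) ∈ Metric.ball 0 r := Metric.mem_ball_self hr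
  have summable_zero : Summable fun n ↦ a n * ((0 : 𝕜) ^ (k n + 1) / (k n + 1)) := by simp
  have diff_deriv (w : 𝕜) (hw : w ∈ Metric.ball 0 r) :
      HasDerivAt (fun w ↦ ∑' n, a n * (w ^ (k n + 1) / (k n + 1)) - f w) 0 w := by
    have series_deriv := hasDerivAt_tsum_of_isPreconnected bound_summable Metric.isOpen_ball
      (convex_ball _ _).isPreconnected (fun n w _ ↦ hasDerivAt_mul_pow_succ_div (a n) (k n) w)
      term_bound h0 summable_zero hw
    rw [(hf' w (hball hw)).tsum_eq] at series_deriv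
    exact (series_deriv.fun_sub (hf w (hball hw))).congr_deriv (sub_self _)
  have diff_const := Metric.isOpen_ball.is_const_of_deriv_eq_zero
    (convex_ball (0 : 𝕜) r).isPreconnected
    (fun w hw ↦ (diff_deriv w hw).differentiableAt.differentiableWithinAt)
    (fun w hw ↦ (diff_deriv w hw).deriv) hz h0
  have tsum_eq : ∑' n, a n * (z ^ (k n + 1) / (k n + 1)) = f z - f 0 := by
    simp only [ne_eq, Nat.add_eq_zero_iff, one_ne_zero, and_false, not_false_eq_true, zero_pow,
      zero_div, mul_zero, tsum_zero, zero_sub] at diff_const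
    linear_combination diff_const
  rw [← tsum_eq]
  exact (summable_of_summable_hasDerivAt_of_isPreconnected bound_summable Metric.isOpen_ball
    (convex_ball _ _).isPreconnected (fun n w _ ↦ hasDerivAt_mul_pow_succ_div (a n) (k n) w)
    term_bound h0 summable_zero hz).hasSum

theorem hasSum_arcsin {t : ℝ} (ht : |t| < 1) :
    HasSum (fun n : ℕ ↦ n.centralBinom / 4 ^ n * (t ^ (2 * n + 1) / (2 * n + 1))) (arcsin t) := by
  have hderiv : ∀ z ∈ Metric.ball (0 : ℝ) 1, HasDerivAt arcsin (1 / √(1 - z ^ 2)) z := by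
    intro z hz
    obtain ⟨h₁, h₂⟩ := abs_lt.1 (mem_ball_zero_iff.1 hz)
    exact hasDerivAt_arcsin h₁.ne' h₂.ne
  have hseries : ∀ z ∈ Metric.ball (0 : ℝ) 1,
      HasSum (fun n : ℕ ↦ n.centralBinom / 4 ^ n * z ^ (2 * n)) (1 / √(1 - z ^ 2)) := by
    intro z hz
    simp_rw [pow_mul]
    refine hasSum_centralBinom_mul_pow ?_
    rwa [abs_pow, sq_abs, sq_lt_one_iff_abs_lt_one, ← Real.norm_eq_abs, ← mem_ball_zero_iff]
  simpa using hasSum_of_hasDerivAt_of_hasSum hderiv hseries (mem_ball_zero_iff.2 ht)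

/-- The primitive of `arcsin` on `[-1, 1]` with value `1` at `0`. Up to the linear term `(π / 2) t`,
it is the profile of the arc-cosine kernel as a function of the cosine `t` of the angle. -/
noncomputable def arcsinPrimitive (t : ℝ) : ℝ := √(1 - t ^ 2) + t * arcsin t

theorem arcsinPrimitive_zero : arcsinPrimitive 0 = 1 := by simp [arcsinPrimitive]

theorem continuous_arcsinPrimitive : Continuous arcsinPrimitive := by
  have := continuous_arcsin
  unfold arcsinPrimitive
  fun_prop

theorem hasDerivAt_arcsinPrimitive {t : ℝ} (ht : |t| < 1) :
    HasDerivAt arcsinPrimitive (arcsin t) t := by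
  obtain ⟨h₁, h₂⟩ := abs_lt.1 ht
  have hpos : 0 < 1 - t ^ 2 := by nlinarith
  refine ((((hasDerivAt_pow 2 t).const_sub 1).sqrt hpos.ne').add
    ((hasDerivAt_id t).mul (hasDerivAt_arcsin h₁.ne' h₂.ne))).congr_deriv ?_
  simp only [id_eq, Nat.cast_ofNat, Nat.add_one_sub_one, pow_one]
  field_simp
  ring

theorem norm_centralBinom_mul_pow_div_le (n : ℕ) {t : ℝ} (ht : |t| ≤ 1) :
    ‖n.centralBinom / 4 ^ n * (t ^ (2 * n + 2) / ((2 * n + 1) * (2 * n + 2)))‖ ≤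
      1 / ((n + 1 : ℕ) : ℝ) ^ 2 := by
  have hcoeff : (n.centralBinom : ℝ) / 4 ^ n ≤ 1 := by
    rw [div_le_one (by positivity)]
    exact_mod_cast n.centralBinom_le_four_pow
  calc
    _ = n.centralBinom / 4 ^ n * (|t| ^ (2 * n + 2) / ((2 * n + 1) * (2 * n + 2))) := by
        rw [Real.norm_eq_abs, abs_mul, abs_div _ ((2 * n + 1) * (2 * n + 2) : ℝ), abs_pow,
          abs_of_nonneg (by positivity), abs_of_nonneg (by positivity : (0 : ℝ) ≤ (2 * n + 1) * _)]
    _ ≤ 1 * (1 / ((2 * n + 1) * (2 * n + 2))) := by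
        gcongr
        exact pow_le_one₀ (abs_nonneg _) ht
    _ ≤ _ := by
        rw [one_mul]
        push_cast
        gcongr
        nlinarith [n.cast_nonneg (α := ℝ)]

theorem hasSum_arcsinPrimitive_sub_one_of_abs_lt_one {t : ℝ} (ht : |t| < 1) :
    HasSum
      (fun n : ℕ ↦ n.centralBinom / 4 ^ n * (t ^ (2 * n + 2) / ((2 * n + 1) * (2 * n + 2))))
      (arcsinPrimitive t - 1) := by
  have hseries : ∀ w ∈ Metric.ball (0 : ℝ) 1,
      HasSum (fun n : ℕ ↦ n.centralBinom / 4 ^ n / (2 * n + 1) * w ^ (2 * n + 1)) (arcsin w) := by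
    intro w hw
    convert hasSum_arcsin (mem_ball_zero_iff.1 hw) using 2 with n
    ring
  have h : HasSum
      (fun n : ℕ ↦ n.centralBinom / 4 ^ n / (2 * n + 1) *
        (t ^ (2 * n + 1 + 1) / ((2 * n + 1 : ℕ) + 1)))
      (arcsinPrimitive t - arcsinPrimitive 0) :=
    hasSum_of_hasDerivAt_of_hasSum
      (fun w hw ↦ hasDerivAt_arcsinPrimitive (mem_ball_zero_iff.1 hw)) hseries
      (mem_ball_zero_iff.2 ht)
  convert h using 1
  · funext n
    push_cast
    field_simp
    ring
  · rw [arcsinPrimitive_zero]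

theorem hasSum_arcsinPrimitive_sub_one {t : ℝ} (ht : |t| ≤ 1) :
    HasSum
      (fun n : ℕ ↦ n.centralBinom / 4 ^ n * (t ^ (2 * n + 2) / ((2 * n + 1) * (2 * n + 2))))
      (arcsinPrimitive t - 1) := by
  have bound_summable : Summable fun n : ℕ ↦ 1 / ((n + 1 : ℕ) : ℝ) ^ 2 :=
    (summable_nat_add_iff 1).2 (Real.summable_one_div_nat_pow.2 one_lt_two)
  have tsum_eq_of_lt : Set.EqOn
      (fun t : ℝ ↦ ∑' n : ℕ, n.centralBinom / 4 ^ n *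
        (t ^ (2 * n + 2) / ((2 * n + 1) * (2 * n + 2))))
      (fun t ↦ arcsinPrimitive t - 1) (Set.Ioo (-1) 1) :=
    fun z hz ↦ (hasSum_arcsinPrimitive_sub_one_of_abs_lt_one (abs_lt.2 hz)).tsum_eq
  have series_continuous : ContinuousOn
      (fun t : ℝ ↦ ∑' n : ℕ, n.centralBinom / 4 ^ n *
        (t ^ (2 * n + 2) / ((2 * n + 1) * (2 * n + 2)))) (Set.Icc (-1) 1) :=
    continuousOn_tsum (fun n ↦ by fun_prop) bound_summable
      fun n z hz ↦ norm_centralBinom_mul_pow_div_le n (abs_le.2 hz)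
  have tsum_eq := tsum_eq_of_lt.of_subset_closure series_continuous
    (continuous_arcsinPrimitive.sub continuous_const).continuousOn Set.Ioo_subset_Icc_self
    (closure_Ioo (by norm_num)).ge (abs_le.1 ht)
  beta_reduce at tsum_eq
  rw [← tsum_eq]
  exact (Summable.of_norm_bounded bound_summable
    fun n ↦ norm_centralBinom_mul_pow_div_le n ht).hasSum

end PowerSeries

section Gaussian

open ProbabilityTheory
open scoped RealInnerProductSpace

variable {E F : Type*} [NormedAddCommGroup E] [InnerProductSpace ℝ E] [FiniteDimensional ℝ E]
  [MeasurableSpace E] [BorelSpace E] [NormedAddCommGroup F] [InnerProductSpace ℝ F]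
  [FiniteDimensional ℝ F] [MeasurableSpace F] [BorelSpace F]

theorem charFun_map_inner_stdGaussian {ι : Type*} [Fintype ι] (v : ι → E)
    (t : EuclideanSpace ℝ ι) :
    charFun ((ProbabilityTheory.stdGaussian E).map fun z ↦ WithLp.toLp 2 fun i ↦ ⟪v i, z⟫) t =
      Complex.exp (-‖∑ i, t i • v i‖ ^ 2 / 2) := by
  have hinner (z : E) :
      ⟪WithLp.toLp 2 fun i ↦ ⟪v i, z⟫, t⟫ = ⟪z, ∑ i, t i • v i⟫ := by
    simp [PiLp.inner_apply, inner_sum, inner_smul_right, real_inner_comm]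
  rw [← charFun_stdGaussian, charFun_apply, charFun_apply,
    integral_map (by fun_prop) (by fun_prop)]
  simp_rw [hinner]

theorem map_inner_stdGaussian_eq_of_gram_eq {ι : Type*} [Finite ι] {v : ι → E} {w : ι → F}
    (h : Matrix.gram ℝ v = Matrix.gram ℝ w) :
    ((ProbabilityTheory.stdGaussian E).map fun z ↦ WithLp.toLp 2 fun i ↦ ⟪v i, z⟫) =
      (ProbabilityTheory.stdGaussian F).map fun z ↦ WithLp.toLp 2 fun i ↦ ⟪w i, z⟫ := by
  have := Fintype.ofFinite ι
  refine Measure.ext_of_charFun (funext fun t ↦ ?_)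
  have hnorm : ‖∑ i, t i • v i‖ ^ 2 = ‖∑ i, t i • w i‖ ^ 2 := by
    rw [← real_inner_self_eq_norm_sq, ← real_inner_self_eq_norm_sq]
    simp_rw [sum_inner, inner_sum, real_inner_smul_left, real_inner_smul_right,
      ← Matrix.gram_apply, h]
  rw [charFun_map_inner_stdGaussian, charFun_map_inner_stdGaussian]
  exact_mod_cast congrArg (fun s : ℝ ↦ Complex.exp (-s / 2)) hnorm

theorem integral_comp_inner_stdGaussian_eq_of_gram_eq {ι G : Type*} [Finite ι]
    [NormedAddCommGroup G] [NormedSpace ℝ G] {v : ι → E} {w : ι → F}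
    (h : Matrix.gram ℝ v = Matrix.gram ℝ w) {g : EuclideanSpace ℝ ι → G}
    (hg : StronglyMeasurable g) :
    ∫ z, g (WithLp.toLp 2 fun i ↦ ⟪v i, z⟫) ∂ProbabilityTheory.stdGaussian E =
      ∫ z, g (WithLp.toLp 2 fun i ↦ ⟪w i, z⟫) ∂ProbabilityTheory.stdGaussian F := by
  rw [← integral_map (by fun_prop) hg.aestronglyMeasurable, map_inner_stdGaussian_eq_of_gram_eq h,
    integral_map (by fun_prop) hg.aestronglyMeasurable]

theorem integral_pow_mul_exp_neg_sq_div_two (n : ℕ) :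
    ∫ r in Set.Ioi (0 : ℝ), r ^ (2 * n + 1) * exp (-r ^ 2 / 2) = 2 ^ n * n.factorial := by
  calc
    _ = ∫ r in Set.Ioi (0 : ℝ), r ^ (2 * n + 1 : ℝ) * exp (-(1 / 2) * r ^ (2 : ℝ)) := by
      refine setIntegral_congr_fun measurableSet_Ioi fun r _ ↦ ?_
      have hcast : (2 * n + 1 : ℝ) = (2 * n + 1 : ℕ) := by push_cast; rfl
      rw [hcast, rpow_natCast, rpow_two]
      ring_nf
    _ = _ := by
      rw [integral_rpow_mul_exp_neg_mul_rpow two_pos (by linarith [n.cast_nonneg (α := ℝ)])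
          (by norm_num),
        show ((2 * n + 1 + 1) / 2 : ℝ) = n + 1 by ring, Gamma_nat_eq_factorial,
        show (-(2 * n + 1 + 1) / 2 : ℝ) = -(n + 1 : ℕ) by push_cast; ring,
        rpow_neg (by norm_num), rpow_natCast, pow_succ, one_div, inv_pow, mul_inv, inv_inv, inv_inv]
      ring

theorem gaussianPDFReal_mul_gaussianPDFReal (a b : ℝ) :
    gaussianPDFReal 0 1 a * gaussianPDFReal 0 1 b = (2 * π)⁻¹ * exp (-(a ^ 2 + b ^ 2) / 2) := by
  have hconst : (√(2 * π))⁻¹ * (√(2 * π))⁻¹ = (2 * π)⁻¹ := by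
    rw [← mul_inv, mul_self_sqrt (by positivity)]
  have hexp : exp (-(a ^ 2 + b ^ 2) / 2) = exp (-a ^ 2 / 2) * exp (-b ^ 2 / 2) := by
    rw [← exp_add]; congr 1; ring
  simp only [gaussianPDFReal, NNReal.coe_one, mul_one, sub_zero, hexp, ← hconst]
  ring

theorem integral_gaussianReal_prod_gaussianReal {G : Type*} [NormedAddCommGroup G] [NormedSpace ℝ G]
    (f : ℝ × ℝ → G) :
    ∫ p, f p ∂(gaussianReal 0 1).prod (gaussianReal 0 1) =
      (2 * π)⁻¹ • ∫ p, exp (-(p.1 ^ 2 + p.2 ^ 2) / 2) • f p := by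
  rw [gaussianReal_of_var_ne_zero _ one_ne_zero,
    prod_withDensity (measurable_gaussianPDF _ _) (measurable_gaussianPDF _ _),
    integral_withDensity_eq_integral_toReal_smul (by fun_prop)
      (ae_of_all _ fun p ↦ ENNReal.mul_lt_top gaussianPDF_lt_top gaussianPDF_lt_top),
    ← Measure.volume_eq_prod, ← integral_smul]
  simp only [ENNReal.toReal_mul, toReal_gaussianPDF, gaussianPDFReal_mul_gaussianPDFReal, mul_smul]

theorem integral_stdGaussian_complex {G : Type*} [NormedAddCommGroup G] [NormedSpace ℝ G]
    (f : ℂ → G) :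
    ∫ z, f z ∂ProbabilityTheory.stdGaussian ℂ =
      (2 * π)⁻¹ • ∫ z, exp (-‖z‖ ^ 2 / 2) • f z := by
  have hmp : MeasurePreserving Complex.measurableEquivRealProd.symm
      ((gaussianReal 0 1).prod (gaussianReal 0 1)) (ProbabilityTheory.stdGaussian ℂ) := by
    refine ⟨Complex.measurableEquivRealProd.symm.measurable, ?_⟩
    rw [stdGaussian_eq_map_pi_orthonormalBasis Complex.orthonormalBasisOneI,
      ← (measurePreserving_finTwoArrow (gaussianReal 0 1)).map_eq,
      Measure.map_map (by fun_prop) (by fun_prop)]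
    congr 1
    funext z
    simp [MeasurableEquiv.finTwoArrow, Complex.mk_eq_add_mul_I]
  rw [← hmp.integral_comp', integral_gaussianReal_prod_gaussianReal,
    ← Complex.volume_preserving_equiv_real_prod.symm.integral_comp']
  simp [Complex.sq_norm, Complex.normSq_apply, ← sq]

theorem relu_of_nonneg {t : ℝ} (ht : 0 ≤ t) : relu t = t := max_eq_left ht

theorem relu_of_nonpos {t : ℝ} (ht : t ≤ 0) : relu t = 0 := max_eq_right ht

theorem relu_mul_of_nonneg {a : ℝ} (ha : 0 ≤ a) (b : ℝ) : relu (a * b) = a * relu b := by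
  simp [relu, mul_max_of_nonneg _ _ ha]

@[fun_prop]
theorem continuous_relu : Continuous relu := continuous_id.max continuous_const

theorem relu_cos_mul_relu_cos_sub {φ θ : ℝ} (hφ : 0 ≤ φ) (hφ' : φ ≤ π) (hθ : θ ∈ Set.Ioo (-π) π) :
    relu (cos θ) * relu (cos (θ - φ)) =
      (Set.Ioc (φ - π / 2) (π / 2)).indicator (fun θ ↦ cos θ * cos (θ - φ)) θ := by
  obtain ⟨hθ₁, hθ₂⟩ := hθ
  by_cases hmem : θ ∈ Set.Ioc (φ - π / 2) (π / 2)
  · have hcos : 0 ≤ cos θ :=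
      cos_nonneg_of_neg_pi_div_two_le_of_le (by linarith [hmem.1]) hmem.2
    have hcos_sub : 0 ≤ cos (θ - φ) :=
      cos_nonneg_of_neg_pi_div_two_le_of_le (by linarith [hmem.1]) (by linarith [hmem.2])
    rw [Set.indicator_of_mem hmem, relu_of_nonneg hcos, relu_of_nonneg hcos_sub]
  rw [Set.indicator_of_notMem hmem, mul_eq_zero]
  rcases le_or_gt θ (φ - π / 2) with h₁ | h₁
  · rcases le_or_gt θ (-(π / 2)) with h₂ | h₂
    · exact .inl <| relu_of_nonpos <| cos_neg θ ▸
        cos_nonpos_of_pi_div_two_le_of_le (by linarith) (by linarith)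
    · exact .inr <| relu_of_nonpos <| cos_neg (θ - φ) ▸
        cos_nonpos_of_pi_div_two_le_of_le (by linarith) (by linarith)
  · have h₂ : π / 2 < θ := lt_of_not_ge fun h₂ ↦ hmem ⟨h₁, h₂⟩
    exact .inl <| relu_of_nonpos <| cos_nonpos_of_pi_div_two_le_of_le h₂.le (by linarith)

theorem integral_cos_mul_cos_sub (a b φ : ℝ) :
    ∫ θ in a..b, cos θ * cos (θ - φ) =
      (sin (2 * b - φ) - sin (2 * a - φ)) / 4 + (b - a) * cos φ / 2 := by
  have hderiv (θ : ℝ) : HasDerivAt (fun θ ↦ sin (2 * θ - φ) / 4 + θ * cos φ / 2)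
      (cos θ * cos (θ - φ)) θ := by
    have hlin : HasDerivAt (fun θ : ℝ ↦ 2 * θ - φ) 2 θ := by
      simpa using ((hasDerivAt_id θ).const_mul 2).sub_const φ
    refine ((hlin.sin.div_const 4).add
      (((hasDerivAt_id θ).mul_const (cos φ)).div_const 2)).congr_deriv ?_
    have hadd : cos (2 * θ - φ) = cos θ * cos (θ - φ) - sin θ * sin (θ - φ) := by
      rw [← cos_add, two_mul, add_sub_assoc]
    have hsub : cos φ = cos θ * cos (θ - φ) + sin θ * sin (θ - φ) := by
      rw [← cos_sub, sub_sub_cancel]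
    linear_combination (hadd + hsub) / 2
  rw [intervalIntegral.integral_eq_sub_of_hasDerivAt (fun θ _ ↦ hderiv θ)
    ((by fun_prop : Continuous fun θ ↦ cos θ * cos (θ - φ)).intervalIntegrable a b)]
  ring

theorem integral_relu_cos_mul_relu_cos_sub {φ : ℝ} (hφ : 0 ≤ φ) (hφ' : φ ≤ π) :
    ∫ θ in Set.Ioo (-π) π, relu (cos θ) * relu (cos (θ - φ)) =
      (sin φ + (π - φ) * cos φ) / 2 := by
  have hsubset : Set.Ioc (φ - π / 2) (π / 2) ⊆ Set.Ioo (-π) π := fun θ hθ ↦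
    ⟨by linarith [hθ.1, pi_pos], by linarith [hθ.2, pi_pos]⟩
  rw [setIntegral_congr_fun measurableSet_Ioo fun θ ↦ relu_cos_mul_relu_cos_sub hφ hφ',
    setIntegral_indicator measurableSet_Ioc, Set.inter_eq_right.2 hsubset,
    ← intervalIntegral.integral_of_le (by linarith), integral_cos_mul_cos_sub,
    show 2 * (π / 2) - φ = π - φ by ring, show 2 * (φ - π / 2) - φ = -(π - φ) by ring,
    sin_neg, sin_pi_sub]
  ring

theorem inner_ofReal_mul_exp_mul_I (a b α β : ℝ) :
    ⟪a * Complex.exp (α * Complex.I), b * Complex.exp (β * Complex.I)⟫ =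
      a * b * cos (β - α) := by
  simp only [Complex.inner, map_mul, Complex.conj_ofReal, Complex.exp_mul_I, ← Complex.ofReal_cos,
    ← Complex.ofReal_sin, map_add, Complex.conj_I, Complex.mul_re, Complex.add_re, Complex.add_im,
    Complex.mul_im, Complex.ofReal_re, Complex.ofReal_im, Complex.I_re, Complex.I_im,
    Complex.neg_re, Complex.neg_im, cos_sub]
  ring

theorem integral_relu_inner_mul_relu_inner_complex {X Y φ : ℝ} (hX : 0 ≤ X) (hY : 0 ≤ Y)
    (hφ : 0 ≤ φ) (hφ' : φ ≤ π) :
    ∫ z, relu ⟪(X : ℂ), z⟫ * relu ⟪Y * Complex.exp (φ * Complex.I), z⟫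
        ∂ProbabilityTheory.stdGaussian ℂ =
      X * Y / (2 * π) * (sin φ + (π - φ) * cos φ) := by
  have hpolar (r θ : ℝ) (hr : 0 < r) :
      r * (exp (-‖Complex.polarCoord.symm (r, θ)‖ ^ 2 / 2) *
        (relu ⟪(X : ℂ), Complex.polarCoord.symm (r, θ)⟫ *
          relu ⟪Y * Complex.exp (φ * Complex.I), Complex.polarCoord.symm (r, θ)⟫)) =
      r ^ (2 * 1 + 1) * exp (-r ^ 2 / 2) * (X * Y * (relu (cos θ) * relu (cos (θ - φ)))) := by
    have hz : Complex.polarCoord.symm (r, θ) = r * Complex.exp (θ * Complex.I) := by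
      rw [Complex.polarCoord_symm_apply, Complex.exp_mul_I, Complex.ofReal_cos, Complex.ofReal_sin]
    have hinner₁ : ⟪(X : ℂ), r * Complex.exp (θ * Complex.I)⟫ = X * r * cos θ := by
      simpa using inner_ofReal_mul_exp_mul_I X r 0 θ
    rw [hz, hinner₁, inner_ofReal_mul_exp_mul_I, ← hz, relu_mul_of_nonneg (by positivity),
      relu_mul_of_nonneg (by positivity), Complex.norm_polarCoord_symm, abs_of_pos hr]
    ring
  calc
    _ = (2 * π)⁻¹ * ∫ p in Set.Ioi (0 : ℝ) ×ˢ Set.Ioo (-π) π,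
        p.1 ^ (2 * 1 + 1) * exp (-p.1 ^ 2 / 2) *
          (X * Y * (relu (cos p.2) * relu (cos (p.2 - φ)))) := by
      rw [integral_stdGaussian_complex, ← Complex.integral_comp_polarCoord_symm,
        polarCoord_target, smul_eq_mul]
      congr 1
      refine setIntegral_congr_fun (measurableSet_Ioi.prod measurableSet_Ioo) fun p hp ↦ ?_
      simpa only [smul_eq_mul] using hpolar p.1 p.2 hp.1
    _ = (2 * π)⁻¹ * (2 * (X * Y * ((sin φ + (π - φ) * cos φ) / 2))) := by
      rw [Measure.volume_eq_prod,
        setIntegral_prod_mul (fun r : ℝ ↦ r ^ (2 * 1 + 1) * exp (-r ^ 2 / 2))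
          (fun θ ↦ X * Y * (relu (cos θ) * relu (cos (θ - φ)))),
        integral_pow_mul_exp_neg_sq_div_two, integral_const_mul,
        integral_relu_cos_mul_relu_cos_sub hφ hφ']
      norm_num
    _ = _ := by
      field_simp

theorem integral_relu_inner_mul_relu_inner (x y : E) :
    ∫ z, relu ⟪x, z⟫ * relu ⟪y, z⟫ ∂ProbabilityTheory.stdGaussian E =
      ‖x‖ * ‖y‖ / (2 * π) *
        (sin (InnerProductGeometry.angle x y) +
          (π - InnerProductGeometry.angle x y) * cos (InnerProductGeometry.angle x y)) := by
  set φ := InnerProductGeometry.angle x y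
  have hgram : Matrix.gram ℝ ![x, y] =
      Matrix.gram ℝ ![(‖x‖ : ℂ), ‖y‖ * Complex.exp (φ * Complex.I)] := by
    have hxy : ⟪(‖x‖ : ℂ), ‖y‖ * Complex.exp (φ * Complex.I)⟫ = ⟪x, y⟫ := by
      rw [← InnerProductGeometry.cos_angle_mul_norm_mul_norm x y]
      simpa [mul_comm] using inner_ofReal_mul_exp_mul_I ‖x‖ ‖y‖ 0 φ
    ext i j
    fin_cases i <;> fin_cases j <;>
      simp [Matrix.gram_apply, hxy, real_inner_comm (‖x‖ : ℂ), real_inner_comm x y]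
  have hrelu : Continuous fun p : EuclideanSpace ℝ (Fin 2) ↦ relu (p 0) * relu (p 1) := by
    fun_prop
  have hint := integral_comp_inner_stdGaussian_eq_of_gram_eq hgram hrelu.stronglyMeasurable
  simp only [Matrix.cons_val_zero, Matrix.cons_val_one] at hint
  rw [hint]
  exact integral_relu_inner_mul_relu_inner_complex (norm_nonneg x) (norm_nonneg y)
    (InnerProductGeometry.angle_nonneg x y) (InnerProductGeometry.angle_le_pi x y)

end Gaussian

section EuclideanSpace

open scoped RealInnerProductSpace

variable {d : ℕ} (x y : Fin d → ℝ)

theorem vnorm_eq_norm_toLp : vnorm x = ‖WithLp.toLp 2 x‖ := by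
  simp [vnorm, EuclideanSpace.norm_eq]

theorem dot_eq_inner_toLp : dot x y = ⟪WithLp.toLp 2 x, WithLp.toLp 2 y⟫ := by
  simp [dot, PiLp.inner_apply, mul_comm]

theorem vnorm_sq : vnorm x ^ 2 = ∑ i, x i ^ 2 :=
  sq_sqrt (Finset.sum_nonneg fun i _ ↦ sq_nonneg (x i))

theorem vnorm_ne_zero {x : Fin d → ℝ} (hx : x ≠ 0) : vnorm x ≠ 0 := by
  simpa [vnorm_eq_norm_toLp] using hx

/-- The cosine of the angle between `x` and `y`, equal to the junk value `0` if one of them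
vanishes. -/
noncomputable def cosSim : ℝ := dot x y / (vnorm x * vnorm y)

theorem cosSim_eq_cos_angle :
    cosSim x y = cos (InnerProductGeometry.angle (WithLp.toLp 2 x) (WithLp.toLp 2 y)) := by
  rw [InnerProductGeometry.cos_angle, cosSim, dot_eq_inner_toLp, vnorm_eq_norm_toLp,
    vnorm_eq_norm_toLp]

theorem abs_cosSim_le_one : |cosSim x y| ≤ 1 := by
  rw [cosSim_eq_cos_angle]
  exact abs_cos_le_one _

theorem cosSim_mul_vnorm_mul_vnorm : cosSim x y * (vnorm x * vnorm y) = dot x y := by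
  rw [cosSim_eq_cos_angle, vnorm_eq_norm_toLp, vnorm_eq_norm_toLp,
    InnerProductGeometry.cos_angle_mul_norm_mul_norm, dot_eq_inner_toLp]

theorem ntk_eq_integral_inner :
    ntk d x y = ∫ z, relu ⟪WithLp.toLp 2 x, z⟫ * relu ⟪WithLp.toLp 2 y, z⟫
      ∂ProbabilityTheory.stdGaussian (EuclideanSpace ℝ (Fin d)) := by
  rw [← ProbabilityTheory.map_pi_eq_stdGaussian, integral_map (by fun_prop) (by fun_prop)]
  simp only [ntk, stdGaussian, dot_eq_inner_toLp]

theorem ntk_eq :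
    ntk d x y = vnorm x * vnorm y / (2 * π) * arcsinPrimitive (cosSim x y) + dot x y / 4 := by
  have hangle : InnerProductGeometry.angle (WithLp.toLp 2 x) (WithLp.toLp 2 y) =
      arccos (cosSim x y) := by
    rw [cosSim_eq_cos_angle, arccos_cos (InnerProductGeometry.angle_nonneg _ _)
      (InnerProductGeometry.angle_le_pi _ _)]
  rw [ntk_eq_integral_inner, integral_relu_inner_mul_relu_inner, ← vnorm_eq_norm_toLp,
    ← vnorm_eq_norm_toLp, ← cosSim_eq_cos_angle, hangle, sin_arccos, arccos, arcsinPrimitive]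
  field_simp
  linear_combination 4 * π * cosSim_mul_vnorm_mul_vnorm x y

end EuclideanSpace

section Harmonics

variable {d : ℕ} (x y : Fin d → ℝ)

/-- The traceless part `x_i² / |x| - |x| / d` of the squared coordinates, scaled to be homogeneous
of degree one; `Fgam` is a linear image of it. -/
noncomputable def tracelessSq (i : Fin d) : ℝ := x i ^ 2 / vnorm x - vnorm x / d

theorem sum_sq_div_vnorm : ∑ i, x i ^ 2 / vnorm x = vnorm x := by
  rw [← Finset.sum_div, ← vnorm_sq, sq, mul_self_div_self]

theorem sum_tracelessSq [NeZero d] : ∑ i, tracelessSq x i = 0 := by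
  simp only [tracelessSq, Finset.sum_sub_distrib, sum_sq_div_vnorm, Finset.sum_const,
    Finset.card_univ, Fintype.card_fin, nsmul_eq_mul]
  rw [mul_div_cancel₀ _ (NeZero.ne _), sub_self]

theorem sum_tracelessSq_mul_tracelessSq [NeZero d] :
    ∑ i, tracelessSq x i * tracelessSq y i =
      (∑ i, (x i * y i) ^ 2) / (vnorm x * vnorm y) - vnorm x * vnorm y / d := by
  calc
    _ = ∑ i, (x i ^ 2 / vnorm x * (y i ^ 2 / vnorm y) - vnorm y / d * (x i ^ 2 / vnorm x) -
          vnorm x / d * tracelessSq y i) :=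
      Finset.sum_congr rfl fun i _ ↦ by rw [tracelessSq, tracelessSq]; ring
    _ = ∑ i, x i ^ 2 / vnorm x * (y i ^ 2 / vnorm y) - vnorm y / d * vnorm x := by
      rw [Finset.sum_sub_distrib, Finset.sum_sub_distrib, ← Finset.mul_sum, ← Finset.mul_sum,
        sum_sq_div_vnorm, sum_tracelessSq, mul_zero, sub_zero]
    _ = _ := by
      simp only [div_mul_div_comm, ← mul_pow, ← Finset.sum_div]
      ring

-- Over `ℝ` the condition on `c` is solved by `1 / (√(n + 1) + 1)`, the constant in `Fgam`.
theorem sum_castSucc_sub_mul_last {R : Type*} [CommRing R] {n : ℕ} {a b : Fin (n + 1) → R} {c : R}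
    (ha : ∑ i, a i = 0) (hb : ∑ i, b i = 0) (hc : 2 * c + n * c ^ 2 = 1) :
    ∑ i : Fin n, (a i.castSucc - c * a (Fin.last n)) * (b i.castSucc - c * b (Fin.last n)) =
      ∑ i, a i * b i := by
  rw [Fin.sum_univ_castSucc] at ha hb ⊢
  calc
    _ = ∑ i : Fin n, (a i.castSucc * b i.castSucc - c * b (Fin.last n) * a i.castSucc -
          c * a (Fin.last n) * b i.castSucc + c ^ 2 * (a (Fin.last n) * b (Fin.last n))) :=
      Finset.sum_congr rfl fun i _ ↦ by ring
    _ = _ := by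
      simp only [Finset.sum_add_distrib, Finset.sum_sub_distrib, ← Finset.mul_sum,
        Finset.sum_const, Finset.card_univ, Fintype.card_fin, nsmul_eq_mul]
      linear_combination (-c * b (Fin.last n)) * ha - c * a (Fin.last n) * hb +
        a (Fin.last n) * b (Fin.last n) * hc

theorem sum_filter_val_lt {M : Type*} [AddCommMonoid M] {n : ℕ} (f : Fin (n + 1) → M) :
    ∑ i with i.val < n, f i = ∑ i : Fin n, f i.castSucc := by
  rw [Finset.sum_filter, Fin.sum_univ_castSucc]
  simp

theorem sum_Fgam_mul_Fgam (hd : 0 < d) :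
    ∑ γ ∈ Finset.univ.filter fun γ : Fin d ↦ (γ : ℕ) < d - 1, Fgam d hd γ x * Fgam d hd γ y =
      (d + 2) / 2 *
        ((∑ i, (x i * y i) ^ 2) / (vnorm x * vnorm y) - vnorm x * vnorm y / d) := by
  obtain ⟨n, rfl⟩ := Nat.exists_eq_add_one.2 hd
  set c : ℝ := 1 / (√(n + 1 : ℕ) + 1) with hc
  have hc_eq : 2 * c + n * c ^ 2 = 1 := by
    have hsq : √(n + 1 : ℕ) ^ 2 = n + 1 := by rw [sq_sqrt (by positivity), Nat.cast_succ]
    rw [hc]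
    field_simp
    linear_combination -hsq
  have hFgam (z : Fin (n + 1) → ℝ) (i : Fin n) : Fgam (n + 1) hd i.castSucc z =
      √((n + 1 : ℕ) + 2) / √2 * (tracelessSq z i.castSucc - c * tracelessSq z (Fin.last n)) := rfl
  have hnormalization : √((n + 1 : ℕ) + 2) / √2 * (√((n + 1 : ℕ) + 2) / √2) =
      ((n + 1 : ℕ) + 2 : ℝ) / 2 := by
    rw [← sq, div_pow, sq_sqrt (by positivity), sq_sqrt (by positivity)]
  rw [Nat.add_sub_cancel, sum_filter_val_lt, ← sum_tracelessSq_mul_tracelessSq,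
    ← sum_castSucc_sub_mul_last (sum_tracelessSq x) (sum_tracelessSq y) hc_eq, Finset.mul_sum]
  refine Finset.sum_congr rfl fun i _ ↦ ?_
  rw [hFgam, hFgam, mul_mul_mul_comm, hnormalization]

theorem two_mul_sum_sum_lt_add_sum_sq {ι R : Type*} [Fintype ι] [LinearOrder ι] [CommSemiring R]
    (u : ι → R) :
    2 * (∑ i, ∑ j, if i < j then u i * u j else 0) + ∑ i, u i ^ 2 = (∑ i, u i) ^ 2 := by
  have hswap : (∑ i, ∑ j, if i < j then u i * u j else 0) =
      ∑ i, ∑ j, if j < i then u i * u j else 0 := by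
    rw [Finset.sum_comm]
    exact Finset.sum_congr rfl fun i _ ↦ Finset.sum_congr rfl fun j _ ↦ by rw [mul_comm]
  have hdiag : ∑ i, u i ^ 2 = ∑ i, ∑ j, if i = j then u i * u j else 0 := by
    simp [sq]
  rw [two_mul]
  nth_rw 2 [hswap]
  rw [hdiag, sq, Finset.sum_mul_sum]
  simp_rw [← Finset.sum_add_distrib]
  refine Finset.sum_congr rfl fun i _ ↦ Finset.sum_congr rfl fun j _ ↦ ?_
  rcases lt_trichotomy i j with h | rfl | h
  · simp [h, h.ne, h.not_gt]
  · simp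
  · simp [h, h.ne', h.not_gt]

theorem sum_sum_Fab_mul_Fab :
    (∑ α, ∑ β, if α < β then Fab d α β x * Fab d α β y else 0) =
      (d + 2) / (vnorm x * vnorm y) * ((dot x y ^ 2 - ∑ i, (x i * y i) ^ 2) / 2) := by
  have hFab (α β : Fin d) : Fab d α β x * Fab d α β y =
      (d + 2) / (vnorm x * vnorm y) * (x α * y α * (x β * y β)) := by
    have hsq : √(d + 2 : ℝ) ^ 2 = d + 2 := sq_sqrt (by positivity)
    rw [Fab, Fab]
    linear_combination x α * x β * y α * y β / (vnorm x * vnorm y) * hsq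
  rw [dot, ← two_mul_sum_sum_lt_add_sum_sq, add_sub_cancel_right,
    mul_div_cancel_left₀ _ two_ne_zero]
  simp_rw [Finset.mul_sum, mul_ite, mul_zero, hFab]

theorem F0_mul_F0 : F0 d x * F0 d y = vnorm x * vnorm y / d := by
  rw [F0, F0, div_mul_div_comm, mul_self_sqrt d.cast_nonneg]

theorem sum_Fl_mul_Fl : ∑ l, Fl d l x * Fl d l y = dot x y := rfl

theorem low_degree_part_eq (hd : 0 < d) :
    ((2 * d + 1) / (4 * π)) * F0 d x * F0 d y
        + (1 / 4) * ∑ l, Fl d l x * Fl d l y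
        + (1 / (2 * π * (d + 2))) *
            ((∑ γ ∈ Finset.univ.filter fun γ : Fin d ↦ (γ : ℕ) < d - 1,
                Fgam d hd γ x * Fgam d hd γ y)
              + ∑ α, ∑ β, if α < β then Fab d α β x * Fab d α β y else 0) =
      vnorm x * vnorm y / (2 * π) + dot x y / 4
        + dot x y ^ 2 / (vnorm x * vnorm y) / (4 * π) := by
  rw [mul_assoc _ (F0 d x), F0_mul_F0, sum_Fl_mul_Fl, sum_Fgam_mul_Fgam, sum_sum_Fab_mul_Fab]
  simp only [div_eq_mul_inv _ (vnorm x * vnorm y)]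
  generalize (vnorm x * vnorm y)⁻¹ = q
  have hd' : (d : ℝ) ≠ 0 := Nat.cast_ne_zero.2 hd.ne'
  field_simp
  ring

end Harmonics

section Remainder

variable {d : ℕ} {x y : Fin d → ℝ}

theorem hasSum_ntkTerm (hx : x ≠ 0) (hy : y ≠ 0) :
    HasSum (ntkTerm x y)
      (vnorm x * vnorm y * (arcsinPrimitive (cosSim x y) - 1)) := by
  have hterm (n : ℕ) : ntkTerm x y n = vnorm x * vnorm y * (n.centralBinom / 4 ^ n *
      (cosSim x y ^ (2 * n + 2) / ((2 * n + 1) * (2 * n + 2)))) := by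
    have hxy : vnorm x * vnorm y ≠ 0 := mul_ne_zero (vnorm_ne_zero hx) (vnorm_ne_zero hy)
    have hfour : (2 : ℝ) ^ (2 * n) = 4 ^ n := by rw [pow_mul]; norm_num
    rw [ntkTerm, Nat.centralBinom_eq_two_mul_choose, hfour, cosSim, div_pow]
    generalize vnorm x * vnorm y = P at hxy
    field_simp
    ring
  rw [funext hterm]
  exact (hasSum_arcsinPrimitive_sub_one (abs_cosSim_le_one x y)).mul_left _

theorem ntkTerm_zero : ntkTerm x y 0 = dot x y ^ 2 / (2 * (vnorm x * vnorm y)) := by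
  simp [ntkTerm]

theorem rker_eq (hx : x ≠ 0) (hy : y ≠ 0) :
    rker x y = vnorm x * vnorm y / (2 * π) * (arcsinPrimitive (cosSim x y) - 1) -
      dot x y ^ 2 / (vnorm x * vnorm y) / (4 * π) := by
  have hsum := hasSum_ntkTerm hx hy
  have htail := hsum.summable.tsum_eq_zero_add
  rw [hsum.tsum_eq, ntkTerm_zero] at htail
  rw [rker, ← sub_eq_iff_eq_add'.2 htail]
  ring

end Remainder

theorem ntk_spectral_expansion (d : ℕ) (hd : 2 ≤ d) (x y : Fin d → ℝ)
    (hx : x ≠ 0) (hy : y ≠ 0) :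
    Summable (fun n : ℕ => |ntkTerm x y (n + 1)|) ∧
    ntk d x y =
      ((2 * d + 1) / (4 * π)) * F0 d x * F0 d y
        + (1 / 4) * ∑ l, Fl d l x * Fl d l y
        + (1 / (2 * π * (d + 2))) *
            ((∑ γ ∈ Finset.univ.filter fun γ : Fin d => (γ : ℕ) < d - 1,
                Fgam d (by omega) γ x * Fgam d (by omega) γ y)
              + ∑ α, ∑ β, if α < β then Fab d α β x * Fab d α β y else 0)
        + rker x y := by
  refine ⟨((summable_nat_add_iff 1).2 (hasSum_ntkTerm hx hy).summable).abs, ?_⟩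
  rw [low_degree_part_eq, ntk_eq, rker_eq hx hy]
  ring
end

section
/- Let d ≥ 2, let γ_d be the standard Gaussian measure on ℝ^d, define g_γ(x) = x_γ²/|x| − |x|/d for 1 ≤ γ ≤ d (x ≠ 0), and define h_γ = g_γ − g_d/(√d + 1) for 1 ≤ γ ≤ d−1. Then for all 1 ≤ γ, γ' ≤ d−1: ∫ h_γ(x)·h_{γ'}(x) dγ_d(x) = (2/(d+2))·δ_{γγ'}, where δ_{γγ'} is the Kronecker delta. In particular the functions h_1,…,h_{d−1} are mutually orthogonal in L²(γ_d) with common squared norm 2/(d+2). -/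
open MeasureTheory Real

/-- `g_γ(x) = x_γ²/|x| − |x|/d`. -/
noncomputable def gfun (d : ℕ) (γ : Fin d) (x : Fin d → ℝ) : ℝ :=
  x γ ^ 2 / vnorm x - vnorm x / d

/-- `h_γ = g_γ − g_d/(√d + 1)`, where `g_d` uses the last coordinate. -/
noncomputable def hfun (d : ℕ) (hd : 0 < d) (γ : Fin d) (x : Fin d → ℝ) : ℝ :=
  gfun d γ x - gfun d ⟨d - 1, Nat.sub_lt hd one_pos⟩ x / (Real.sqrt d + 1)

/-!
A rotation-invariant measure gives `⟪u, x⟫⁴ w(‖x‖)` the same integral for all unit vectors `u`.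
By polarization, the integral of `⟪u, x⟫² ⟪v, x⟫² w(‖x‖)` for orthonormal `u`, `v` is a third of
that value, and summing `⟪bᵢ, x⟫²` to `‖x‖²` over an orthonormal basis determines the value itself.
For `w(r) = r⁻²` the Gram matrix of `g_1, …, g_d` comes out as a multiple of `δ_ij - 1/d`, the
orthogonal projection along `(1, …, 1)`. The number `s = 1/(√d + 1)` solves `(1 - s)² = d s²`, which
says exactly that the projections of the vectors `e_i - s e_d`, `i < d`, are orthonormal.
-/

open scoped RealInnerProductSpace

section Rotation

variable {E : Type*} [NormedAddCommGroup E] [InnerProductSpace ℝ E] [MeasurableSpace E]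
  {μ : Measure E} {w : ℝ → ℝ}

/-- Invariance of a measure on an inner product space under every linear isometric automorphism,
reflections included: the symmetry that determines the mixed fourth moments. -/
def IsRotationInvariant (μ : Measure E) : Prop :=
  ∀ e : E ≃ₗᵢ[ℝ] E, μ.map e = μ

theorem integrable_inner_sq_mul [OpensMeasurableSpace E] {f : E → ℝ} (u : E)
    (hf : Integrable (fun x ↦ ‖x‖ ^ 2 * f x) μ) : Integrable (fun x ↦ ⟪u, x⟫ ^ 2 * f x) μ := by
  have measurable_ratio : Measurable fun x : E ↦ ⟪u, x⟫ ^ 2 / ‖x‖ ^ 2 :=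
    (((continuous_const.inner continuous_id).pow 2).measurable).div (by fun_prop)
  have ratio_le (x : E) : ‖⟪u, x⟫ ^ 2 / ‖x‖ ^ 2‖ ≤ ‖u‖ ^ 2 := by
    rw [Real.norm_of_nonneg (by positivity)]
    refine div_le_of_le_mul₀ (by positivity) (by positivity) ?_
    rw [← mul_pow, sq_le_sq, abs_of_nonneg (a := ‖u‖ * ‖x‖) (by positivity)]
    exact abs_real_inner_le_norm u x
  refine (hf.bdd_mul measurable_ratio.aestronglyMeasurable (.of_forall ratio_le)).congr
    (.of_forall fun x ↦ ?_)
  rcases eq_or_ne x 0 with rfl | hx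
  · simp
  · have : ‖x‖ ≠ 0 := norm_ne_zero_iff.2 hx
    field_simp

theorem integrable_inner_sq_mul_inner_sq_mul [OpensMeasurableSpace E] {f : E → ℝ} (u v : E)
    (hf : Integrable (fun x ↦ ‖x‖ ^ 4 * f x) μ) :
    Integrable (fun x ↦ ⟪u, x⟫ ^ 2 * ⟪v, x⟫ ^ 2 * f x) μ := by
  have hv : Integrable (fun x ↦ ⟪v, x⟫ ^ 2 * (‖x‖ ^ 2 * f x)) μ :=
    integrable_inner_sq_mul v (by simpa only [← mul_assoc, ← pow_add] using hf)
  simpa only [mul_assoc] using integrable_inner_sq_mul u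
    (f := fun x ↦ ⟪v, x⟫ ^ 2 * f x) (by simpa only [mul_left_comm] using hv)

namespace IsRotationInvariant

variable [BorelSpace E]

theorem integral_inner_norm_congr {F : Type*} [NormedAddCommGroup F] [NormedSpace ℝ F]
    (hμ : IsRotationInvariant μ) {u v : E} (huv : ‖u‖ = ‖v‖) (f : ℝ → ℝ → F) :
    ∫ x, f ⟪u, x⟫ ‖x‖ ∂μ = ∫ x, f ⟪v, x⟫ ‖x‖ ∂μ := by
  let e : E ≃ₗᵢ[ℝ] E := (ℝ ∙ (u - v))ᗮ.reflection
  have heu : e u = v := Submodule.reflection_sub huv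
  have he : MeasurePreserving e.toHomeomorph.toMeasurableEquiv μ μ :=
    ⟨e.continuous.measurable, hμ e⟩
  rw [← he.integral_comp' fun x ↦ f ⟪v, x⟫ ‖x‖]
  refine integral_congr_ae (.of_forall fun x ↦ ?_)
  change f ⟪u, x⟫ ‖x‖ = f ⟪v, e x⟫ ‖e x‖
  rw [← heu, e.inner_map_map, e.norm_map]

theorem three_mul_integral_inner_sq_mul_inner_sq (hμ : IsRotationInvariant μ)
    (hw : Integrable (fun x ↦ ‖x‖ ^ 4 * w ‖x‖) μ) {u v : E} (huv : ‖u‖ = ‖v‖)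
    (hinner : ⟪u, v⟫ = 0) :
    3 * ∫ x, ⟪u, x⟫ ^ 2 * ⟪v, x⟫ ^ 2 * w ‖x‖ ∂μ = ∫ x, ⟪u, x⟫ ^ 4 * w ‖x‖ ∂μ := by
  have quartic_congr {a b : E} (hab : ‖a‖ = ‖b‖) :
      ∫ x, ⟪a, x⟫ ^ 4 * w ‖x‖ ∂μ = ∫ x, ⟪b, x⟫ ^ 4 * w ‖x‖ ∂μ :=
    hμ.integral_inner_norm_congr hab fun t r ↦ t ^ 4 * w r
  have quartic_integrable (a : E) : Integrable (fun x ↦ ⟪a, x⟫ ^ 4 * w ‖x‖) μ := by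
    simpa only [← pow_add] using integrable_inner_sq_mul_inner_sq_mul a a hw
  have norm_add_sub : ‖u + v‖ = ‖u - v‖ :=
    (norm_sub_eq_norm_add (inner_eq_zero_symm.1 hinner)).symm
  have norm_add_smul : ‖u + v‖ = ‖√2 • u‖ := by
    rw [← sq_eq_sq₀ (norm_nonneg _) (norm_nonneg _), norm_add_sq_real, hinner, ← huv, norm_smul,
      mul_pow, Real.norm_eq_abs, sq_abs, Real.sq_sqrt zero_le_two]
    ring
  have quartic_scale : ∫ x, ⟪√2 • u, x⟫ ^ 4 * w ‖x‖ ∂μ = 4 * ∫ x, ⟪u, x⟫ ^ 4 * w ‖x‖ ∂μ := by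
    have sqrt_two_pow : √2 ^ 4 = 4 := by
      rw [pow_mul √2 2 2, Real.sq_sqrt zero_le_two]
      norm_num
    simp only [real_inner_smul_left, mul_pow, sqrt_two_pow, mul_assoc, integral_const_mul]
  have polarization : ∫ x, 12 * (⟪u, x⟫ ^ 2 * ⟪v, x⟫ ^ 2 * w ‖x‖) ∂μ =
      ∫ x, ⟪u + v, x⟫ ^ 4 * w ‖x‖ + ⟪u - v, x⟫ ^ 4 * w ‖x‖
        - 2 * (⟪u, x⟫ ^ 4 * w ‖x‖ + ⟪v, x⟫ ^ 4 * w ‖x‖) ∂μ := by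
    congr with x
    rw [inner_add_left, inner_sub_left]
    ring
  rw [integral_const_mul, integral_sub ((quartic_integrable _).fun_add (quartic_integrable _))
      (((quartic_integrable _).fun_add (quartic_integrable _)).const_mul 2),
    integral_add (quartic_integrable _) (quartic_integrable _), integral_const_mul,
    integral_add (quartic_integrable _) (quartic_integrable _), ← quartic_congr huv,
    ← quartic_congr norm_add_sub, quartic_congr norm_add_smul, quartic_scale] at polarization
  linarith

variable {ι : Type*} [Fintype ι]

theorem card_mul_integral_inner_sq (hμ : IsRotationInvariant μ) (b : OrthonormalBasis ι ℝ E)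
    (hw : Integrable (fun x ↦ ‖x‖ ^ 2 * w ‖x‖) μ) (i : ι) :
    Fintype.card ι * ∫ x, ⟪b i, x⟫ ^ 2 * w ‖x‖ ∂μ = ∫ x, ‖x‖ ^ 2 * w ‖x‖ ∂μ := by
  calc Fintype.card ι * ∫ x, ⟪b i, x⟫ ^ 2 * w ‖x‖ ∂μ
      = ∑ _j : ι, ∫ x, ⟪b i, x⟫ ^ 2 * w ‖x‖ ∂μ := by simp
    _ = ∑ j, ∫ x, ⟪b j, x⟫ ^ 2 * w ‖x‖ ∂μ :=
        Finset.sum_congr rfl fun j _ ↦ hμ.integral_inner_norm_congr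
          (by simp) fun t r ↦ t ^ 2 * w r
    _ = ∫ x, ‖x‖ ^ 2 * w ‖x‖ ∂μ := by
        rw [← integral_finsetSum _ fun j _ ↦ integrable_inner_sq_mul (b j) hw]
        simp only [← Finset.sum_mul, b.sum_sq_inner_right]

theorem card_add_two_mul_integral_inner_pow_four (hμ : IsRotationInvariant μ)
    (b : OrthonormalBasis ι ℝ E) (hw : Integrable (fun x ↦ ‖x‖ ^ 4 * w ‖x‖) μ) (i : ι) :
    (Fintype.card ι + 2) * ∫ x, ⟪b i, x⟫ ^ 4 * w ‖x‖ ∂μ =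
      3 * ∫ x, ⟪b i, x⟫ ^ 2 * (‖x‖ ^ 2 * w ‖x‖) ∂μ := by
  classical
  have mixed (j : ι) : 3 * ∫ x, ⟪b i, x⟫ ^ 2 * ⟪b j, x⟫ ^ 2 * w ‖x‖ ∂μ =
      (1 + if i = j then 2 else 0) * ∫ x, ⟪b i, x⟫ ^ 4 * w ‖x‖ ∂μ := by
    split_ifs with hij
    · subst hij
      simp only [← pow_add]
      norm_num
    · rw [hμ.three_mul_integral_inner_sq_mul_inner_sq hw (by simp) (b.inner_eq_zero hij)]
      ring
  calc (Fintype.card ι + 2) * ∫ x, ⟪b i, x⟫ ^ 4 * w ‖x‖ ∂μ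
      = ∑ j, (1 + if i = j then 2 else 0) * ∫ x, ⟪b i, x⟫ ^ 4 * w ‖x‖ ∂μ := by
        simp [← Finset.sum_mul, Finset.sum_add_distrib]
    _ = 3 * ∑ j, ∫ x, ⟪b i, x⟫ ^ 2 * ⟪b j, x⟫ ^ 2 * w ‖x‖ ∂μ := by
        simp only [Finset.mul_sum, mixed]
    _ = 3 * ∫ x, ⟪b i, x⟫ ^ 2 * (‖x‖ ^ 2 * w ‖x‖) ∂μ := by
        rw [← integral_finsetSum _ fun j _ ↦
          integrable_inner_sq_mul_inner_sq_mul (b i) (b j) hw]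
        simp only [← Finset.sum_mul, ← Finset.mul_sum, b.sum_sq_inner_right, mul_assoc]

theorem integral_inner_sq_mul_inner_sq [DecidableEq ι] (hμ : IsRotationInvariant μ)
    (b : OrthonormalBasis ι ℝ E) (hw : Integrable (fun x ↦ ‖x‖ ^ 4 * w ‖x‖) μ) (i j : ι) :
    ∫ x, ⟪b i, x⟫ ^ 2 * ⟪b j, x⟫ ^ 2 * w ‖x‖ ∂μ =
      (if i = j then 3 else 1) / (Fintype.card ι * (Fintype.card ι + 2)) *
        ∫ x, ‖x‖ ^ 4 * w ‖x‖ ∂μ := by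
  have hcard : (Fintype.card ι : ℝ) ≠ 0 :=
    Nat.cast_ne_zero.2 (Fintype.card_pos_iff.2 ⟨i⟩).ne'
  have norm_pow_four (x : E) : ‖x‖ ^ 2 * (‖x‖ ^ 2 * w ‖x‖) = ‖x‖ ^ 4 * w ‖x‖ := by ring
  have quartic := hμ.card_add_two_mul_integral_inner_pow_four b hw i
  have quadratic := hμ.card_mul_integral_inner_sq b (w := fun r ↦ r ^ 2 * w r)
    (by simpa only [norm_pow_four] using hw) i
  simp only [norm_pow_four] at quadratic
  rw [div_mul_eq_mul_div, eq_div_iff (by positivity)]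
  split_ifs with hij
  · subst hij
    simp only [← pow_add]
    linear_combination (Fintype.card ι : ℝ) * quartic + 3 * quadratic
  · have mixed := hμ.three_mul_integral_inner_sq_mul_inner_sq hw (by simp) (b.inner_eq_zero hij)
    linear_combination (Fintype.card ι : ℝ) * (Fintype.card ι + 2) / 3 * mixed
      + (Fintype.card ι : ℝ) / 3 * quartic + quadratic

end IsRotationInvariant

end Rotation

section Coordinates

variable {ι : Type*} [Fintype ι] {μ : Measure (EuclideanSpace ℝ ι)}

theorem pow_four_mul_inv_sq {K : Type*} [Field K] (r : K) : r ^ 4 * (r ^ 2)⁻¹ = r ^ 2 := by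
  rcases eq_or_ne r 0 with rfl | hr
  · simp
  · field_simp

theorem integrable_sq_coord (hsq : Integrable (fun x ↦ ‖x‖ ^ 2) μ) (i : ι) :
    Integrable (fun x ↦ x i ^ 2) μ := by
  simpa only [EuclideanSpace.basisFun_inner, mul_one] using
    integrable_inner_sq_mul (f := fun _ ↦ 1) (EuclideanSpace.basisFun ι ℝ i)
      (by simpa only [mul_one] using hsq)

theorem integrable_sq_coord_mul_sq_coord_mul_inv_norm_sq
    (hsq : Integrable (fun x ↦ ‖x‖ ^ 2) μ) (i j : ι) :
    Integrable (fun x ↦ x i ^ 2 * x j ^ 2 * (‖x‖ ^ 2)⁻¹) μ := by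
  simpa only [EuclideanSpace.basisFun_inner] using
    integrable_inner_sq_mul_inner_sq_mul (f := fun x ↦ (‖x‖ ^ 2)⁻¹)
      (EuclideanSpace.basisFun ι ℝ i) (EuclideanSpace.basisFun ι ℝ j)
      (by simpa only [pow_four_mul_inv_sq] using hsq)

theorem IsRotationInvariant.integral_sq_coord (hμ : IsRotationInvariant μ)
    (hsq : Integrable (fun x ↦ ‖x‖ ^ 2) μ) (i : ι) :
    ∫ x, x i ^ 2 ∂μ = (∫ x, ‖x‖ ^ 2 ∂μ) / Fintype.card ι := by
  have hcard : (Fintype.card ι : ℝ) ≠ 0 :=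
    Nat.cast_ne_zero.2 (Fintype.card_pos_iff.2 ⟨i⟩).ne'
  rw [eq_div_iff hcard, mul_comm]
  simpa only [EuclideanSpace.basisFun_inner, mul_one] using
    hμ.card_mul_integral_inner_sq (EuclideanSpace.basisFun ι ℝ) (w := fun _ ↦ 1)
      (by simpa only [mul_one] using hsq) i

theorem IsRotationInvariant.integral_sq_coord_mul_sq_coord_mul_inv_norm_sq [DecidableEq ι]
    (hμ : IsRotationInvariant μ) (hsq : Integrable (fun x ↦ ‖x‖ ^ 2) μ) (i j : ι) :
    ∫ x, x i ^ 2 * x j ^ 2 * (‖x‖ ^ 2)⁻¹ ∂μ =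
      (if i = j then 3 else 1) / (Fintype.card ι * (Fintype.card ι + 2)) *
        ∫ x, ‖x‖ ^ 2 ∂μ := by
  have moment := hμ.integral_inner_sq_mul_inner_sq (EuclideanSpace.basisFun ι ℝ)
    (w := fun r ↦ (r ^ 2)⁻¹) (by simpa only [pow_four_mul_inv_sq] using hsq) i j
  simp_rw [EuclideanSpace.basisFun_inner, pow_four_mul_inv_sq] at moment
  exact moment

end Coordinates

section StdGaussian

variable {E : Type*} [NormedAddCommGroup E] [InnerProductSpace ℝ E] [FiniteDimensional ℝ E]
  [MeasurableSpace E] [BorelSpace E]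

theorem isRotationInvariant_stdGaussian : IsRotationInvariant (ProbabilityTheory.stdGaussian E) :=
  ProbabilityTheory.stdGaussian_map

theorem integrable_norm_sq_stdGaussian :
    Integrable (fun x : E ↦ ‖x‖ ^ 2) (ProbabilityTheory.stdGaussian E) :=
  (ProbabilityTheory.IsGaussian.memLp_two_id).integrable_norm_pow two_ne_zero

theorem integral_inner_sq_stdGaussian (u : E) :
    ∫ x, ⟪u, x⟫ ^ 2 ∂ProbabilityTheory.stdGaussian E = ‖u‖ ^ 2 := by
  have variance_eq := ProbabilityTheory.variance_dual_stdGaussian (innerSL ℝ u)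
  rw [ProbabilityTheory.variance_of_integral_eq_zero (by fun_prop)
    (ProbabilityTheory.integral_strongDual_stdGaussian _), innerSL_apply_norm] at variance_eq
  simpa using variance_eq

theorem integral_norm_sq_stdGaussian :
    ∫ x : E, ‖x‖ ^ 2 ∂ProbabilityTheory.stdGaussian E = Module.finrank ℝ E := by
  let b := stdOrthonormalBasis ℝ E
  have integrable_inner_sq (i) :
      Integrable (fun x ↦ ⟪b i, x⟫ ^ 2) (ProbabilityTheory.stdGaussian E) := by
    simpa using integrable_inner_sq_mul (f := fun _ ↦ 1) (b i)
      (by simpa using integrable_norm_sq_stdGaussian)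
  simp only [← b.sum_sq_inner_right]
  rw [integral_finsetSum _ fun i _ ↦ integrable_inner_sq i]
  simp [integral_inner_sq_stdGaussian]

theorem integral_stdGaussian_eq {F : Type*} [NormedAddCommGroup F] [NormedSpace ℝ F] {d : ℕ}
    (f : (Fin d → ℝ) → F) :
    ∫ x, f x ∂stdGaussian d =
      ∫ x, f x.ofLp ∂ProbabilityTheory.stdGaussian (EuclideanSpace ℝ (Fin d)) := by
  rw [← ProbabilityTheory.map_pi_eq_stdGaussian]
  exact (integral_map_equiv (MeasurableEquiv.toLp 2 (Fin d → ℝ)) fun x ↦ f x.ofLp).symm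

end StdGaussian

section Gram

variable {d : ℕ} {μ : Measure (EuclideanSpace ℝ (Fin d))}

theorem vnorm_ofLp (x : EuclideanSpace ℝ (Fin d)) : vnorm x.ofLp = ‖x‖ := by
  simp [vnorm, EuclideanSpace.norm_eq]

theorem gfun_mul_gfun (i j : Fin d) (x : EuclideanSpace ℝ (Fin d)) :
    gfun d i x.ofLp * gfun d j x.ofLp =
      x i ^ 2 * x j ^ 2 * (‖x‖ ^ 2)⁻¹ - (x i ^ 2 + x j ^ 2) / d + ‖x‖ ^ 2 / d ^ 2 := by
  have hd : (d : ℝ) ≠ 0 := Nat.cast_ne_zero.2 i.pos.ne'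
  rw [gfun, gfun, vnorm_ofLp]
  rcases eq_or_ne x 0 with rfl | hx
  · simp
  · have : ‖x‖ ≠ 0 := norm_ne_zero_iff.2 hx
    field_simp
    ring

theorem integrable_gfun_mul_gfun (hsq : Integrable (fun x ↦ ‖x‖ ^ 2) μ) (i j : Fin d) :
    Integrable (fun x ↦ gfun d i x.ofLp * gfun d j x.ofLp) μ := by
  simp only [gfun_mul_gfun]
  exact ((integrable_sq_coord_mul_sq_coord_mul_inv_norm_sq hsq i j).sub
    (((integrable_sq_coord hsq i).add (integrable_sq_coord hsq j)).div_const _)).add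
    (hsq.div_const _)

theorem IsRotationInvariant.integral_gfun_mul_gfun (hμ : IsRotationInvariant μ)
    (hsq : Integrable (fun x ↦ ‖x‖ ^ 2) μ) (i j : Fin d) :
    ∫ x, gfun d i x.ofLp * gfun d j x.ofLp ∂μ =
      2 / (d + 2) * ((∫ x, ‖x‖ ^ 2 ∂μ) / d) * ((if i = j then 1 else 0) - 1 / d) := by
  have hd : (d : ℝ) ≠ 0 := Nat.cast_ne_zero.2 i.pos.ne'
  have hi := integrable_sq_coord hsq i
  have hj := integrable_sq_coord hsq j
  have hij := integrable_sq_coord_mul_sq_coord_mul_inv_norm_sq hsq i j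
  simp only [gfun_mul_gfun]
  rw [integral_add (hij.sub' ((hi.fun_add hj).div_const _)) (hsq.div_const _),
    integral_sub hij ((hi.fun_add hj).div_const _), integral_div, integral_div,
    integral_add hi hj, hμ.integral_sq_coord hsq, hμ.integral_sq_coord hsq,
    hμ.integral_sq_coord_mul_sq_coord_mul_inv_norm_sq hsq, Fintype.card_fin]
  split_ifs <;> field_simp <;> ring

theorem IsRotationInvariant.integral_gfun_sub_mul_mul_gfun_sub_mul
    (hμ : IsRotationInvariant μ) (hsq : Integrable (fun x ↦ ‖x‖ ^ 2) μ) {i j k : Fin d}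
    (hik : i ≠ k) (hjk : j ≠ k) (s : ℝ) :
    ∫ x, (gfun d i x.ofLp - s * gfun d k x.ofLp) * (gfun d j x.ofLp - s * gfun d k x.ofLp) ∂μ =
      2 / (d + 2) * ((∫ x, ‖x‖ ^ 2 ∂μ) / d) *
        ((if i = j then 1 else 0) + s ^ 2 - (1 - s) ^ 2 / d) := by
  have expand (x : EuclideanSpace ℝ (Fin d)) :
      (gfun d i x.ofLp - s * gfun d k x.ofLp) * (gfun d j x.ofLp - s * gfun d k x.ofLp) =
        gfun d i x.ofLp * gfun d j x.ofLp
          - s * (gfun d i x.ofLp * gfun d k x.ofLp + gfun d j x.ofLp * gfun d k x.ofLp)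
          + s ^ 2 * (gfun d k x.ofLp * gfun d k x.ofLp) := by
    ring
  have hgg (a b : Fin d) := integrable_gfun_mul_gfun hsq a b
  have cross := ((hgg i k).fun_add (hgg j k)).const_mul s
  simp only [expand]
  rw [integral_add ((hgg i j).sub' cross) ((hgg k k).const_mul _),
    integral_sub (hgg i j) cross, integral_const_mul, integral_const_mul,
    integral_add (hgg i k) (hgg j k)]
  simp only [hμ.integral_gfun_mul_gfun hsq, if_neg hik, if_neg hjk, if_true]
  ring

theorem one_sub_inv_sqrt_add_one_sq {a : ℝ} (ha : 0 ≤ a) :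
    (1 - (√a + 1)⁻¹) ^ 2 = a * (√a + 1)⁻¹ ^ 2 := by
  have : √a + 1 ≠ 0 := by positivity
  nth_rw 2 [← Real.sq_sqrt ha]
  field_simp
  ring

theorem hfun_orthogonal_general (hd : 0 < d) (hμ : IsRotationInvariant μ)
    (hsq : Integrable (fun x ↦ ‖x‖ ^ 2) μ) (γ γ' : Fin d)
    (hγ : (γ : ℕ) < d - 1) (hγ' : (γ' : ℕ) < d - 1) :
    ∫ x, hfun d hd γ x.ofLp * hfun d hd γ' x.ofLp ∂μ =
      if γ = γ' then 2 / (d + 2) * ((∫ x, ‖x‖ ^ 2 ∂μ) / d) else 0 := by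
  have hd' : (d : ℝ) ≠ 0 := Nat.cast_ne_zero.2 hd.ne'
  simp only [hfun, div_eq_inv_mul (gfun d ⟨d - 1, _⟩ _)]
  rw [hμ.integral_gfun_sub_mul_mul_gfun_sub_mul hsq (Fin.ne_of_lt hγ) (Fin.ne_of_lt hγ'),
    one_sub_inv_sqrt_add_one_sq d.cast_nonneg, mul_div_cancel_left₀ _ hd',
    add_sub_cancel_right, mul_ite, mul_one, mul_zero]

end Gram

/-- One-based indices `1 ≤ γ, γ' ≤ d−1` correspond to zero-based indices `< d−1`. -/
theorem hfun_orthogonal (d : ℕ) (hd : 2 ≤ d) (γ γ' : Fin d)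
    (hγ : (γ : ℕ) < d - 1) (hγ' : (γ' : ℕ) < d - 1) :
    ∫ x, hfun d (by omega) γ x * hfun d (by omega) γ' x ∂ stdGaussian d
      = if γ = γ' then 2 / ((d : ℝ) + 2) else 0 := by
  have hd' : (d : ℝ) ≠ 0 := by positivity
  rw [integral_stdGaussian_eq, hfun_orthogonal_general _ isRotationInvariant_stdGaussian
    integrable_norm_sq_stdGaussian γ γ' hγ hγ', integral_norm_sq_stdGaussian,
    finrank_euclideanSpace_fin, div_self hd', mul_one]
end
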